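/- arXiv:2510.04137 — 2 statements merged into one kernel-verified Lean document; each statement's English description precedes it below -/
import Mathlib

section
/- Let n ≥ 1 and p ≥ n + 1 be integers, σ ∈ (0,1), H a complex Hilbert space, and A : 𝕋ⁿ → B(H) a C^p map. Then there exist constants C₁, C₂ > 0 depending only on n and p, and a map A_σ : 𝕋ⁿ → B(H) whose Fourier coefficients satisfy Σ_{ℓ ∈ ℤⁿ} ‖Â_σ(ℓ)‖_op e^{σ|ℓ|} < ∞, such that: (i) sup_{φ ∈ 𝕋ⁿ} ‖A(φ) − A_σ(φ)‖_op ≤ C₁ σ^p ‖A‖_{C^p}; (ii) Σ_{ℓ ∈ ℤⁿ} ‖Â_σ(ℓ)‖_op e^{σ|ℓ|} ≤ C₂ ‖A‖_{C^p}; (iii) Â_σ(0) = Â(0), i.e. A_σ has the same average over 𝕋ⁿ as A. -/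
open MeasureTheory Real Filter

noncomputable section

/-- ℓ¹ norm of an integer vector. -/
def l1Z {n : ℕ} (ℓ : Fin n → ℤ) : ℝ := ∑ j, |(ℓ j : ℝ)|

/-- ℓ¹ norm of a real vector. -/
def l1R {n : ℕ} (x : Fin n → ℝ) : ℝ := ∑ j, |x j|

/-- `f : ℝⁿ → E` is `2π`-periodic in each variable (i.e. descends to the torus `𝕋ⁿ`). -/
def Periodic2Pi {n : ℕ} {E : Type*} (f : (Fin n → ℝ) → E) : Prop :=
  ∀ (x : Fin n → ℝ) (ℓ : Fin n → ℤ), f (fun j => x j + 2 * π * ℓ j) = f x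

/-- Fourier coefficient `F̂(ℓ) = (2π)^{-n} ∫_{𝕋ⁿ} F(φ) e^{-i ℓ·φ} dφ`. -/
def fCoeff {n : ℕ} {E : Type*} [NormedAddCommGroup E] [NormedSpace ℂ E] [CompleteSpace E]
    (f : (Fin n → ℝ) → E) (ℓ : Fin n → ℤ) : E :=
  ((2 * π) ^ n : ℝ)⁻¹ • ∫ x in Set.univ.pi (fun _ : Fin n => Set.Icc (0:ℝ) (2 * π)),
    Complex.exp (-Complex.I * (∑ j, (ℓ j : ℂ) * (x j : ℂ))) • f x

/-- Partial derivative in the coordinate direction `j`. -/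
def pderiv1 {n : ℕ} {E : Type*} [NormedAddCommGroup E] [NormedSpace ℝ E]
    (j : Fin n) (f : (Fin n → ℝ) → E) : (Fin n → ℝ) → E :=
  fun x => fderiv ℝ f x (Pi.single j 1)

/-- Iterated partial derivative along a list of coordinate directions. -/
def listPDeriv {n : ℕ} {E : Type*} [NormedAddCommGroup E] [NormedSpace ℝ E]
    (f : (Fin n → ℝ) → E) : List (Fin n) → ((Fin n → ℝ) → E)
  | [] => f
  | j :: js => pderiv1 j (listPDeriv f js)

/-- The `C^p` norm: sup over all iterated partial derivatives of order `≤ p` of the sup norm. -/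
def CpNorm {n : ℕ} {E : Type*} [NormedAddCommGroup E] [NormedSpace ℝ E]
    (p : ℕ) (f : (Fin n → ℝ) → E) : ℝ :=
  sSup {r : ℝ | ∃ (ms : List (Fin n)) (x : Fin n → ℝ), ms.length ≤ p ∧ r = ‖listPDeriv f ms x‖}

end


section Smoothing

open scoped fwdDiff

variable {n : ℕ} {E : Type*} [NormedAddCommGroup E] [NormedSpace ℝ E]

lemma contDiff_pderiv1 {m : ℕ} {f : (Fin n → ℝ) → E} (hf : ContDiff ℝ (m + 1 : ℕ) f)
    (j : Fin n) : ContDiff ℝ m (pderiv1 j f) := by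
  have h : ContDiff ℝ m (fderiv ℝ f) := hf.fderiv_right (by norm_cast)
  exact h.clm_apply contDiff_const

lemma contDiff_listPDeriv (ms : List (Fin n)) : ∀ {m : ℕ} {f : (Fin n → ℝ) → E},
    ContDiff ℝ (m + ms.length : ℕ) f → ContDiff ℝ m (listPDeriv f ms) := by
  induction ms with
  | nil => intro m f hf; simpa [listPDeriv] using hf
  | cons j js ih =>
    intro m f hf
    refine contDiff_pderiv1 (ih ?_) j
    convert hf using 2
    simp only [List.length_cons]; omega

lemma listPDeriv_comp_add (f : (Fin n → ℝ) → E) (c : Fin n → ℝ) (ms : List (Fin n)) :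
    listPDeriv (fun x => f (x + c)) ms = fun x => listPDeriv f ms (x + c) := by
  induction ms with
  | nil => rfl
  | cons j js ih =>
    funext x
    simp only [listPDeriv, pderiv1, ih]
    rw [fderiv_comp_add_right]

lemma listPDeriv_fwdDiff (h : Fin n → ℝ) (ms : List (Fin n)) {f : (Fin n → ℝ) → E}
    (hf : ContDiff ℝ (ms.length : ℕ) f) :
    listPDeriv (Δ_[h] f) ms = Δ_[h] (listPDeriv f ms) := by
  induction ms with
  | nil => rfl
  | cons j js ih =>
    have hf' : ContDiff ℝ (js.length : ℕ) f := hf.of_le (by simp)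
    have hd : ContDiff ℝ (1 : ℕ) (listPDeriv f js) := by
      apply contDiff_listPDeriv
      convert hf using 2
      simp [add_comm]
    have hd' : Differentiable ℝ (listPDeriv f js) := hd.differentiable (by norm_num)
    funext x
    simp only [listPDeriv, pderiv1, ih hf', fwdDiff]
    have h1 : DifferentiableAt ℝ (fun y => listPDeriv f js (y + h)) x :=
      (hd'.comp (differentiable_id.add_const h)) x
    have : fderiv ℝ (Δ_[h] (listPDeriv f js)) x =
      fderiv ℝ (listPDeriv f js) (x + h) - fderiv ℝ (listPDeriv f js) x := by
      have := fderiv_sub h1 (hd' x)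
      rw [fderiv_comp_add_right] at this
      exact this
    rw [this]; rfl

lemma norm_fderiv_apply_le {F : (Fin n → ℝ) → E} {M : ℝ} (x : Fin n → ℝ)
    (hM : ∀ j, ‖pderiv1 j F x‖ ≤ M) (h : Fin n → ℝ) : ‖fderiv ℝ F x h‖ ≤ l1R h * M := by
  have : h = ∑ j, h j • (Pi.single j (1:ℝ) : Fin n → ℝ) := by
    simp [← Pi.single_smul, Finset.univ_sum_single]
  rw [this, map_sum, ← this, l1R, Finset.sum_mul]
  refine (norm_sum_le _ _).trans (Finset.sum_le_sum fun j _ => ?_)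
  rw [map_smul, norm_smul, Real.norm_eq_abs]
  exact mul_le_mul_of_nonneg_left (hM j) (abs_nonneg _)

lemma norm_fwdDiff_le {F : (Fin n → ℝ) → E} {M : ℝ} (hF : Differentiable ℝ F)
    (hM : ∀ j x, ‖pderiv1 j F x‖ ≤ M) (h x : Fin n → ℝ) : ‖Δ_[h] F x‖ ≤ l1R h * M := by
  have hg : ∀ t : ℝ, HasDerivAt (fun t : ℝ => F (x + t • h)) (fderiv ℝ F (x + t • h) h) t := by
    intro t
    have h2 : HasDerivAt (fun t : ℝ => x + t • h) h t := by
      simpa using ((hasDerivAt_id t).smul_const h).const_add x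
    exact (hF (x + t • h)).hasFDerivAt.comp_hasDerivAt t h2
  have := norm_image_sub_le_of_norm_deriv_le_segment_01'
    (f := fun t : ℝ => F (x + t • h)) (C := l1R h * M)
    (fun t _ => (hg t).hasDerivWithinAt)
    (fun t _ => norm_fderiv_apply_le _ (fun j => hM j _) h)
  simpa [fwdDiff] using this

lemma l1R_nonneg (h : Fin n → ℝ) : 0 ≤ l1R h := Finset.sum_nonneg fun _ _ => abs_nonneg _

lemma norm_fwdDiff_iter_le (h : Fin n → ℝ) (m : ℕ) : ∀ {f : (Fin n → ℝ) → E} {M : ℝ},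
    ContDiff ℝ m f → (∀ ms : List (Fin n), ms.length = m → ∀ x, ‖listPDeriv f ms x‖ ≤ M) →
    ∀ x, ‖(Δ_[h])^[m] f x‖ ≤ l1R h ^ m * M := by
  induction m with
  | zero => intro f M _ hM x; simpa [listPDeriv] using hM [] rfl x
  | succ m ih =>
    intro f M hf hM x
    rw [Function.iterate_succ_apply, pow_succ, mul_assoc]
    refine ih ?_ ?_ x
    · have hf' : ContDiff ℝ m f := hf.of_le (by norm_cast; omega)
      exact (hf'.comp (contDiff_id.add contDiff_const)).sub hf'
    · intro ms hms x
      rw [listPDeriv_fwdDiff h ms (hf.of_le (by rw [hms]; norm_cast; omega))]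
      refine norm_fwdDiff_le ?_ ?_ h x
      · have : ContDiff ℝ (1 : ℕ) (listPDeriv f ms) := by
          apply contDiff_listPDeriv
          rw [hms, add_comm]; exact hf
        exact this.differentiable (by norm_num)
      · intro j x
        exact hM (j :: ms) (by simp [hms]) x

lemma periodic_bounded {f : (Fin n → ℝ) → E} (hc : Continuous f) (hp : Periodic2Pi f) :
    ∃ M, ∀ x, ‖f x‖ ≤ M := by
  have hK : IsCompact (Set.univ.pi (fun _ : Fin n => Set.Icc (0:ℝ) (2 * π))) :=
    isCompact_univ_pi fun _ => isCompact_Icc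
  obtain ⟨M, hM⟩ := hK.exists_bound_of_continuousOn hc.continuousOn
  refine ⟨M, fun x => ?_⟩
  have h2 : (0:ℝ) < 2 * π := by positivity
  rw [← hp x (fun j => - ⌊x j / (2 * π)⌋)]
  apply hM
  intro j _
  have h3 := Int.floor_le (x j / (2 * π))
  have h4 := Int.lt_floor_add_one (x j / (2 * π))
  rw [le_div_iff₀ h2] at h3
  rw [div_lt_iff₀ h2] at h4
  simp only [Set.mem_Icc]
  push_cast
  constructor <;> nlinarith

lemma periodic_listPDeriv {f : (Fin n → ℝ) → E} (hp : Periodic2Pi f) (ms : List (Fin n)) :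
    Periodic2Pi (listPDeriv f ms) := by
  intro x ℓ
  have h1 : (fun x => f (x + fun j => 2 * π * (ℓ j : ℝ))) = f := by
    funext y; exact hp y ℓ
  have h2 := listPDeriv_comp_add f (fun j => 2 * π * (ℓ j : ℝ)) ms
  rw [h1] at h2
  exact (congrFun h2 x).symm

lemma norm_listPDeriv_le_CpNorm {p : ℕ} {f : (Fin n → ℝ) → E} (hf : ContDiff ℝ p f)
    (hp : Periodic2Pi f) (ms : List (Fin n)) (hms : ms.length ≤ p) (x : Fin n → ℝ) :
    ‖listPDeriv f ms x‖ ≤ CpNorm p f := by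
  refine le_csSup ?_ ⟨ms, x, hms, rfl⟩
  have hfin : {l : List (Fin n) | l.length ≤ p}.Finite := List.finite_length_le _ _
  have : {r : ℝ | ∃ (ms : List (Fin n)) (x : Fin n → ℝ), ms.length ≤ p ∧
      r = ‖listPDeriv f ms x‖} ⊆ ⋃ l ∈ {l : List (Fin n) | l.length ≤ p},
        Set.range (fun x => ‖listPDeriv f l x‖) := by
    rintro r ⟨l, x, hl, rfl⟩
    exact Set.mem_biUnion (show l ∈ {l : List (Fin n) | l.length ≤ p} from hl) ⟨x, rfl⟩
  refine BddAbove.mono this ((hfin.bddAbove_biUnion).2 ?_)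
  intro l hl
  have hc : Continuous (listPDeriv f l) := by
    have : ContDiff ℝ (0 : ℕ) (listPDeriv f l) :=
      contDiff_listPDeriv l (hf.of_le (by simpa using hl))
    exact this.continuous
  obtain ⟨M, hM⟩ := periodic_bounded hc (periodic_listPDeriv hp l)
  exact ⟨M, by rintro _ ⟨x, rfl⟩; exact hM x⟩

end Smoothing

section Fourier

variable {n : ℕ} {E : Type*} [NormedAddCommGroup E]

/-- The closed cube `[0, 2π]ⁿ`. -/
def cube2Pi (n : ℕ) : Set (Fin n → ℝ) := Set.univ.pi (fun _ : Fin n => Set.Icc (0:ℝ) (2 * π))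

lemma setIntegral_shift [NormedSpace ℝ E] {F : (Fin n → ℝ) → E} (hF : Periodic2Pi F)
    (c : Fin n → ℝ) : ∫ x in cube2Pi n, F (x + c) = ∫ x in cube2Pi n, F x := by
  have h2 : (2 * π : ℝ) ≠ 0 := by positivity
  have h2' : (0:ℝ) < 2 * π := by positivity
  let b : Module.Basis (Fin n) ℝ (Fin n → ℝ) :=
    (Pi.basisFun ℝ (Fin n)).unitsSMul (fun _ => Units.mk0 (2 * π) h2)
  have hD : ZSpan.fundamentalDomain b = Set.univ.pi (fun _ : Fin n => Set.Ico (0:ℝ) (2 * π)) := by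
    ext x
    simp only [ZSpan.mem_fundamentalDomain, b, Module.Basis.repr_unitsSMul, Set.mem_pi,
      Set.mem_univ, true_imp_iff, Pi.basisFun_repr, Units.smul_def, Units.val_inv_eq_inv_val,
      Units.val_mk0, smul_eq_mul, Set.mem_Ico]
    refine forall_congr' fun i => ?_
    rw [inv_mul_eq_div, div_lt_one h2', le_div_iff₀ h2', zero_mul]
  have hae : (ZSpan.fundamentalDomain b : Set (Fin n → ℝ)) =ᵐ[volume] cube2Pi n := by
    rw [hD, cube2Pi, Set.pi_univ_Icc]
    exact Measure.univ_pi_Ico_ae_eq_Icc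
  have hfd := ZSpan.isAddFundamentalDomain' b (volume : Measure (Fin n → ℝ))
  have hfd2 := hfd.vadd_of_comm c
  have hcount : Countable (Submodule.span ℤ (Set.range b)).toAddSubgroup :=
    inferInstanceAs (Countable (Submodule.span ℤ (Set.range b)))
  have hinv : ∀ (g : (Submodule.span ℤ (Set.range b)).toAddSubgroup) (x : Fin n → ℝ),
      F (g +ᵥ x) = F x := by
    rintro ⟨g, hg⟩ x
    obtain ⟨ℓ, rfl⟩ := (Submodule.mem_span_range_iff_exists_fun ℤ).1 hg
    rw [← hF x ℓ]
    congr 1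
    funext j
    simp [b, AddSubgroup.vadd_def, Module.Basis.unitsSMul_apply, Pi.single_apply,
      Units.smul_def, Finset.sum_apply]
    ring
  have key := hfd2.setIntegral_eq hfd hinv
  rw [← setIntegral_congr_set hae, ← setIntegral_congr_set hae, ← key]
  have := (measurePreserving_add_right (volume : Measure (Fin n → ℝ)) c).setIntegral_image_emb
    (MeasurableEquiv.addRight c).measurableEmbedding F (ZSpan.fundamentalDomain b)
  rw [← this]
  congr 3
  ext x
  simp [add_comm]

/-- The character `e^{i ℓ·x}`. -/
noncomputable def char2Pi (ℓ : Fin n → ℤ) (x : Fin n → ℝ) : ℂ :=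
  Complex.exp (Complex.I * (∑ j, (ℓ j : ℂ) * (x j : ℂ)))

lemma char2Pi_add (ℓ : Fin n → ℤ) (x y : Fin n → ℝ) :
    char2Pi ℓ (x + y) = char2Pi ℓ x * char2Pi ℓ y := by
  simp [char2Pi, ← Complex.exp_add, mul_add, Finset.sum_add_distrib]

lemma char2Pi_neg (ℓ : Fin n → ℤ) (x : Fin n → ℝ) :
    char2Pi ℓ (-x) * char2Pi ℓ x = 1 := by
  rw [← char2Pi_add]; simp [char2Pi]

lemma norm_char2Pi (ℓ : Fin n → ℤ) (x : Fin n → ℝ) : ‖char2Pi ℓ x‖ = 1 := by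
  have : (∑ j, (ℓ j : ℂ) * (x j : ℂ)) = ((∑ j, (ℓ j : ℝ) * x j : ℝ) : ℂ) := by push_cast; rfl
  rw [char2Pi, this, mul_comm, Complex.norm_exp_ofReal_mul_I]

lemma continuous_char2Pi (ℓ : Fin n → ℤ) : Continuous (char2Pi ℓ) := by
  unfold char2Pi; fun_prop

lemma periodic_char2Pi (ℓ : Fin n → ℤ) : Periodic2Pi (char2Pi ℓ) := by
  intro x m
  have : (fun j => x j + 2 * π * (m j : ℝ)) = x + fun j => 2 * π * (m j : ℝ) := rfl
  rw [this, char2Pi_add]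
  have : char2Pi ℓ (fun j => 2 * π * (m j : ℝ)) = 1 := by
    rw [char2Pi, Complex.exp_eq_one_iff]
    refine ⟨∑ j, ℓ j * m j, ?_⟩
    push_cast
    rw [Finset.mul_sum, Finset.sum_mul]
    exact Finset.sum_congr rfl fun j _ => by ring
  rw [this, mul_one]

lemma isFinite_cube : IsFiniteMeasure ((volume : Measure (Fin n → ℝ)).restrict (cube2Pi n)) := by
  have hK : IsCompact (cube2Pi n) := isCompact_univ_pi fun _ => isCompact_Icc
  exact ⟨by simpa using hK.measure_lt_top⟩

variable [NormedSpace ℂ E] [CompleteSpace E]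

lemma fCoeff_eq (f : (Fin n → ℝ) → E) (ℓ : Fin n → ℤ) :
    fCoeff f ℓ = ((2 * π) ^ n : ℝ)⁻¹ • ∫ x in cube2Pi n, char2Pi ℓ (-x) • f x := by
  unfold fCoeff cube2Pi char2Pi
  simp

lemma periodic_neg_char (ℓ : Fin n → ℤ) : Periodic2Pi (fun x => char2Pi ℓ (-x)) := by
  intro x m
  have := periodic_char2Pi ℓ (-x) (-m)
  refine Eq.trans ?_ this
  show char2Pi ℓ _ = char2Pi ℓ _
  congr 1
  funext j
  simp; ring

lemma fCoeff_shift {f : (Fin n → ℝ) → E} (hf : Periodic2Pi f) (ℓ : Fin n → ℤ)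
    (c : Fin n → ℝ) : fCoeff (fun x => f (x + c)) ℓ = char2Pi ℓ c • fCoeff f ℓ := by
  rw [fCoeff_eq, fCoeff_eq]
  have hP : Periodic2Pi (fun x => char2Pi ℓ (-x) • f x) := by
    intro x m
    have h1 := periodic_neg_char ℓ x m
    simp only at h1 ⊢
    rw [h1, hf x m]
  have h := setIntegral_shift hP c
  rw [← h, smul_comm (char2Pi ℓ c)]
  rw [← integral_smul (char2Pi ℓ c)]
  congr 2
  funext x
  rw [smul_smul, neg_add, char2Pi_add, mul_comm, mul_assoc, char2Pi_neg, mul_one]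

lemma integrable_bdd {X : Type*} [TopologicalSpace X] [MeasurableSpace X] [BorelSpace X]
    [SecondCountableTopology X] {μ : Measure X} [IsFiniteMeasure μ] {f : X → E}
    (hc : Continuous f) {M : ℝ} (hM : ∀ x, ‖f x‖ ≤ M) : Integrable f μ :=
  Integrable.of_bound hc.aestronglyMeasurable M (Eventually.of_forall hM)

lemma volume_real_cube : (volume : Measure (Fin n → ℝ)).real (cube2Pi n) = (2 * π) ^ n := by
  have h2' : (0:ℝ) ≤ 2 * π := by positivity
  rw [cube2Pi, Measure.real, volume_pi, Measure.pi_pi]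
  simp [ENNReal.toReal_ofReal, Real.pi_nonneg]

lemma norm_fCoeff_le {f : (Fin n → ℝ) → E} {M : ℝ} (hM : ∀ x, ‖f x‖ ≤ M) (ℓ : Fin n → ℤ) :
    ‖fCoeff f ℓ‖ ≤ M := by
  have h2' : (0:ℝ) < (2 * π) ^ n := by positivity
  have := isFinite_cube (n := n)
  have h := norm_setIntegral_le_of_norm_le_const (μ := (volume : Measure (Fin n → ℝ)))
    (s := cube2Pi n) (f := fun x => char2Pi ℓ (-x) • f x) (C := M)
    (by simpa using this.1) (fun x _ => by rw [norm_smul, norm_char2Pi, one_mul]; exact hM x)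
  rw [volume_real_cube] at h
  rw [fCoeff_eq, norm_smul, norm_inv, Real.norm_of_nonneg h2'.le, inv_mul_le_iff₀ h2']
  linarith

lemma fCoeff_sum {ι : Type*} (s : Finset ι) (a : ι → ℂ) {f : ι → (Fin n → ℝ) → E}
    (hc : ∀ i, Continuous (f i)) {M : ι → ℝ} (hM : ∀ i x, ‖f i x‖ ≤ M i) (ℓ : Fin n → ℤ) :
    fCoeff (fun x => ∑ i ∈ s, a i • f i x) ℓ = ∑ i ∈ s, a i • fCoeff (f i) ℓ := by
  have := isFinite_cube (n := n)
  simp only [fCoeff_eq, Finset.smul_sum]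
  rw [integral_finsetSum, Finset.smul_sum]
  · refine Finset.sum_congr rfl fun i _ => ?_
    rw [smul_comm (a i), ← integral_smul (a i)]
    congr 2
    funext x
    exact smul_comm _ _ _
  · intro i _
    refine integrable_bdd (M := ‖a i‖ * M i) ?_ ?_
    · have h := hc i
      have h2 := (continuous_char2Pi ℓ).comp (continuous_neg)
      exact h2.smul (h.const_smul _)
    · intro x
      rw [norm_smul, norm_smul, norm_char2Pi, one_mul]
      exact mul_le_mul_of_nonneg_left (hM i x) (norm_nonneg _)

open scoped fwdDiff in
lemma fCoeff_fwdDiff_iter {f : (Fin n → ℝ) → E} (hc : Continuous f) (hf : Periodic2Pi f)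
    (ℓ : Fin n → ℤ) (h : Fin n → ℝ) (p : ℕ) :
    fCoeff ((Δ_[h])^[p] f) ℓ = (char2Pi ℓ h - 1) ^ p • fCoeff f ℓ := by
  induction p generalizing f with
  | zero => simp
  | succ p ih =>
    have hshift : Continuous (fun x => f (x + h)) := by fun_prop
    have hd : Continuous (Δ_[h] f) := hshift.sub hc
    have hp : Periodic2Pi (Δ_[h] f) := by
      intro x m
      have h1 := hf x m
      have h2 := hf (x + h) m
      simp only [fwdDiff]
      rw [h1, ← h2]
      congr 2
      funext j
      simp; ring
    rw [Function.iterate_succ_apply, ih hd hp, pow_succ, mul_smul]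
    congr 1
    obtain ⟨M, hM⟩ := periodic_bounded hc hf
    have := fCoeff_sum (Finset.univ : Finset (Fin 2)) ![1, -1]
      (f := ![fun x => f (x + h), f]) (M := fun _ => M)
      (by intro i; fin_cases i <;> [exact hshift; exact hc])
      (by intro i x; fin_cases i <;> [exact hM (x + h); exact hM x]) ℓ
    simp only [Fin.sum_univ_two, Matrix.cons_val_zero, Matrix.cons_val_one, one_smul,
      neg_smul, ← sub_eq_add_neg] at this
    rw [fCoeff_shift hf] at this
    rw [sub_smul, one_smul]
    exact this

lemma norm_fCoeff_mul_pow_le {p : ℕ} (hp0 : p ≠ 0) {f : (Fin n → ℝ) → E} (hf : ContDiff ℝ p f)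
    (hp : Periodic2Pi f) (ℓ : Fin n → ℤ) (j : Fin n) :
    ‖fCoeff f ℓ‖ * |(ℓ j : ℝ)| ^ p ≤ (π / 2) ^ p * CpNorm p f := by
  have hC0 : 0 ≤ CpNorm p f :=
    (norm_nonneg _).trans (norm_listPDeriv_le_CpNorm hf hp [] (by simp) 0)
  rcases eq_or_ne (ℓ j) 0 with h0 | h0
  · simp only [h0, Int.cast_zero, abs_zero, zero_pow hp0, mul_zero]
    positivity
  have h0' : (ℓ j : ℝ) ≠ 0 := by exact_mod_cast h0
  set h : Fin n → ℝ := Pi.single j (π / ℓ j) with hh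
  have h1 := norm_fwdDiff_iter_le h p hf (M := CpNorm p f)
    (fun ms hms x => norm_listPDeriv_le_CpNorm hf hp ms hms.le x)
  have h2 := norm_fCoeff_le h1 ℓ
  have hch : char2Pi ℓ h = -1 := by
    rw [char2Pi]
    have : (∑ i, (ℓ i : ℂ) * (h i : ℂ)) = π := by
      rw [Finset.sum_eq_single j]
      · have : (ℓ j : ℂ) ≠ 0 := by exact_mod_cast h0
        simp only [hh, Pi.single_eq_same]
        push_cast
        field_simp
      · intro i _ hij; simp [hh, hij]
      · simp
    rw [this, mul_comm, Complex.exp_pi_mul_I]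
  have hl : l1R h = π / |(ℓ j : ℝ)| := by
    rw [l1R, Finset.sum_eq_single j]
    · simp [hh, abs_div, abs_of_pos Real.pi_pos]
    · intro i _ hij; simp [hh, hij]
    · simp
  rw [fCoeff_fwdDiff_iter hf.continuous hp, hch, hl, norm_smul, norm_pow] at h2
  have h3 : ‖(-1 - 1 : ℂ)‖ = 2 := by norm_num
  rw [h3, div_pow, div_mul_eq_mul_div, le_div_iff₀ (by positivity)] at h2
  rw [div_pow, div_mul_eq_mul_div, le_div_iff₀ (by positivity)]
  linarith

end Fourier

section Gauss

variable {n : ℕ}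

/-- Standard Gaussian measure on `ℝⁿ`. -/
noncomputable def stdG (n : ℕ) : Measure (Fin n → ℝ) :=
  Measure.pi (fun _ : Fin n => ProbabilityTheory.gaussianReal 0 1)

instance : IsProbabilityMeasure (stdG n) := by unfold stdG; infer_instance

lemma integral_char_stdG (ℓ : Fin n → ℤ) (c : ℝ) :
    ∫ z, char2Pi ℓ (c • z) ∂(stdG n) = ((∏ j, Real.exp (-(c * ℓ j) ^ 2 / 2) : ℝ) : ℂ) := by
  have h1 : ∀ z : Fin n → ℝ, char2Pi ℓ (c • z) =
      ∏ j, Complex.exp (((c * ℓ j : ℝ) : ℂ) * (z j : ℂ) * Complex.I) := by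
    intro z
    rw [char2Pi, ← Complex.exp_sum, Finset.mul_sum]
    congr 1
    refine Finset.sum_congr rfl fun j _ => ?_
    simp only [Pi.smul_apply, smul_eq_mul]
    push_cast; ring
  simp only [h1]
  rw [stdG, integral_fintype_prod_eq_prod
    (f := fun j (x : ℝ) => Complex.exp (((c * ℓ j : ℝ) : ℂ) * (x : ℂ) * Complex.I)),
    Complex.ofReal_prod]
  refine Finset.prod_congr rfl fun j _ => ?_
  rw [← charFun_apply_real, ProbabilityTheory.charFun_gaussianReal]
  push_cast
  congr 1
  simp
  ring

lemma integrable_l1R_pow (p : ℕ) : Integrable (fun z => l1R z ^ p) (stdG n) := by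
  have h : MemLp (fun z : Fin n → ℝ => ∑ j, |z j|) p (stdG n) := by
    refine memLp_finsetSum _ fun j _ => ?_
    have h1 := ProbabilityTheory.memLp_id_gaussianReal' (μ := 0) (v := 1) (p : ENNReal) (by simp)
    have h2 := h1.comp_measurePreserving
      (measurePreserving_eval (fun _ : Fin n => ProbabilityTheory.gaussianReal 0 1) j)
    exact h2.norm
  have := h.integrable_norm_pow'
  refine this.congr (Eventually.of_forall fun z => ?_)
  have : 0 ≤ l1R z := l1R_nonneg z
  show ‖l1R z‖ ^ p = _
  rw [Real.norm_of_nonneg this]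

variable {E : Type*} [NormedAddCommGroup E] [NormedSpace ℂ E]

/-- Gaussian average of `f` at scale `c`. -/
noncomputable def gaussAvg (f : (Fin n → ℝ) → E) (c : ℝ) (x : Fin n → ℝ) : E :=
  ∫ z, f (x + c • z) ∂(stdG n)

lemma periodic_gaussAvg {f : (Fin n → ℝ) → E} (hf : Periodic2Pi f) (c : ℝ) :
    Periodic2Pi (gaussAvg f c) := by
  intro x m
  unfold gaussAvg
  congr 1
  funext z
  rw [← hf (x + c • z) m]
  congr 1
  funext j
  simp; ring

lemma norm_gaussAvg_le {f : (Fin n → ℝ) → E} {M : ℝ} (hM : ∀ x, ‖f x‖ ≤ M) (c : ℝ)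
    (x : Fin n → ℝ) : ‖gaussAvg f c x‖ ≤ M := by
  have := norm_integral_le_of_norm_le_const (μ := stdG n) (f := fun z => f (x + c • z))
    (Eventually.of_forall fun z => hM (x + c • z))
  simpa [gaussAvg] using this

lemma continuous_gaussAvg {f : (Fin n → ℝ) → E} (hc : Continuous f) {M : ℝ}
    (hM : ∀ x, ‖f x‖ ≤ M) (c : ℝ) : Continuous (gaussAvg f c) := by
  refine continuous_of_dominated (bound := fun _ => M) ?_ ?_ (integrable_const _) ?_
  · intro x
    have : Continuous fun z : Fin n → ℝ => f (x + c • z) := by fun_prop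
    exact this.aestronglyMeasurable
  · intro x; exact Eventually.of_forall fun z => hM _
  · refine Eventually.of_forall fun z => ?_
    fun_prop

lemma fCoeff_gaussAvg [CompleteSpace E] {f : (Fin n → ℝ) → E} (hc : Continuous f)
    (hf : Periodic2Pi f) (c : ℝ) (ℓ : Fin n → ℤ) :
    fCoeff (gaussAvg f c) ℓ =
      ((∏ j, Real.exp (-(c * ℓ j) ^ 2 / 2) : ℝ) : ℂ) • fCoeff f ℓ := by
  obtain ⟨M, hM⟩ := periodic_bounded hc hf
  have := isFinite_cube (n := n)
  rw [← integral_char_stdG, ← integral_smul_const]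
  simp only [← fCoeff_shift hf]
  simp only [fCoeff_eq]
  rw [integral_smul]
  congr 1
  simp only [gaussAvg, ← integral_smul]
  refine integral_integral_swap ?_
  refine integrable_bdd (M := M) ?_ ?_
  · have h1 := continuous_char2Pi ℓ
    unfold Function.uncurry
    fun_prop
  · rintro ⟨x, z⟩
    simp only [Function.uncurry]
    rw [norm_smul, norm_char2Pi, one_mul]
    exact hM _

end Gauss

section Lattice

lemma summable_norm_int {n p : ℕ} (hp : n + 1 ≤ p) :
    Summable (fun ℓ : Fin n → ℤ => (‖ℓ‖⁻¹) ^ p) := by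
  let b := Pi.basisFun ℝ (Fin n)
  let L := Submodule.span ℤ (Set.range b)
  have hr : Module.finrank ℤ L = n := by
    rw [ZLattice.rank ℝ L]; simp
  have hs := ZLattice.summable_norm_pow_inv L p (by omega)
  have hmem : ∀ ℓ : Fin n → ℤ, (fun j => (ℓ j : ℝ)) ∈ L := by
    intro ℓ
    refine (Submodule.mem_span_range_iff_exists_fun ℤ).2 ⟨ℓ, ?_⟩
    funext j
    simp [b, Pi.single_apply]
  let e : (Fin n → ℤ) → L := fun ℓ => ⟨fun j => (ℓ j : ℝ), hmem ℓ⟩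
  have he : Function.Injective e := by
    intro a c h
    funext j
    have := congrFun (congrArg Subtype.val h) j
    simpa [e] using this
  refine (hs.comp_injective he).congr fun ℓ => ?_
  have : ‖e ℓ‖ = ‖ℓ‖ := by
    show ‖(fun j => (ℓ j : ℝ))‖ = ‖ℓ‖
    simp [Pi.norm_def]
    congr 1
  show ‖e ℓ‖⁻¹ ^ p = ‖ℓ‖⁻¹ ^ p
  rw [this]

end Lattice

section Main

variable {n p : ℕ} {E : Type*} [NormedAddCommGroup E] [NormedSpace ℂ E]

/-- The coefficients of the combination of Gaussian averages. -/
def smCoeff (p k : ℕ) : ℂ := (-1) ^ k * (p.choose (k + 1) : ℂ)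

/-- The smoothed map. -/
noncomputable def smooth (p : ℕ) (σ : ℝ) (f : (Fin n → ℝ) → E) (x : Fin n → ℝ) : E :=
  ∑ k ∈ Finset.range p, smCoeff p k • gaussAvg f (((k + 1 : ℕ) : ℝ) * σ) x

lemma sum_smCoeff (hp : p ≠ 0) : ∑ k ∈ Finset.range p, smCoeff p k = 1 := by
  have h := Int.alternating_sum_range_choose_of_ne hp
  rw [Finset.sum_range_succ'] at h
  have h' : ((∑ k ∈ Finset.range p, (-1) ^ (k + 1) * (p.choose (k + 1) : ℤ) : ℤ) : ℂ)
      + 1 = 0 := by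
    have := congrArg (fun z : ℤ => (z : ℂ)) h
    simpa using this
  push_cast at h'
  have h2 : ∑ k ∈ Finset.range p, smCoeff p k =
      -∑ k ∈ Finset.range p, (-1) ^ (k + 1) * (p.choose (k + 1) : ℂ) := by
    rw [← Finset.sum_neg_distrib]
    exact Finset.sum_congr rfl fun k _ => by rw [smCoeff, pow_succ]; ring
  rw [h2]
  linear_combination -h'

lemma norm_smCoeff (k : ℕ) : ‖smCoeff p k‖ = p.choose (k + 1) := by
  simp [smCoeff]

open scoped fwdDiff in
lemma smooth_error [CompleteSpace E] {f : (Fin n → ℝ) → E} (hf : ContDiff ℝ p f)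
    (hper : Periodic2Pi f) {σ : ℝ} (hσ : 0 < σ) (x : Fin n → ℝ) :
    ‖f x - smooth p σ f x‖ ≤ (∫ z, l1R z ^ p ∂(stdG n)) * σ ^ p * CpNorm p f := by
  obtain ⟨M, hM⟩ := periodic_bounded hf.continuous hper
  have hc := hf.continuous
  have key : ∫ z, (Δ_[σ • z])^[p] f x ∂(stdG n) = (-1 : ℂ) ^ p • (f x - smooth p σ f x) := by
    have h1 : ∀ z : Fin n → ℝ, (Δ_[σ • z])^[p] f x = ∑ k ∈ Finset.range (p + 1),
        ((-1 : ℂ) ^ (p - k) * p.choose k) • f (x + ((k : ℝ) * σ) • z) := by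
      intro z
      rw [fwdDiff_iter_eq_sum_shift]
      refine Finset.sum_congr rfl fun k _ => ?_
      rw [← Int.cast_smul_eq_zsmul ℂ, ← Nat.cast_smul_eq_nsmul ℝ, smul_smul]
      push_cast
      rfl
    simp only [h1]
    rw [integral_finsetSum]
    · simp only [integral_smul]
      rw [Finset.sum_range_succ', smul_sub, smooth, Finset.smul_sum, sub_eq_neg_add,
        ← Finset.sum_neg_distrib]
      congr 1
      · refine Finset.sum_congr rfl fun k hk => ?_
        have hk' : k + 1 ≤ p := Finset.mem_range.1 hk
        rw [smul_smul, ← neg_smul, smCoeff, gaussAvg]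
        congr 1
        obtain ⟨d, rfl⟩ := Nat.exists_eq_add_of_le hk'
        have : k + 1 + d - (k + 1) = d := by omega
        rw [this, pow_add, pow_succ]
        have h2 : ((-1 : ℂ) ^ k) * (-1) ^ k = 1 := by
          rw [← mul_pow]; norm_num
        linear_combination (-(-1 : ℂ) ^ d * ((k + 1 + d).choose (k + 1) : ℂ)) * h2
      · simp
    · intro k _
      refine integrable_bdd (M := ‖((-1 : ℂ) ^ (p - k) * p.choose k)‖ * M) ?_ ?_
      · fun_prop
      · intro z
        rw [norm_smul]
        exact mul_le_mul_of_nonneg_left (hM _) (norm_nonneg _)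
  have h3 : ‖f x - smooth p σ f x‖ = ‖∫ z, (Δ_[σ • z])^[p] f x ∂(stdG n)‖ := by
    rw [key, norm_smul]; simp
  rw [h3]
  have h4 : ∀ z : Fin n → ℝ, ‖(Δ_[σ • z])^[p] f x‖ ≤ l1R z ^ p * (σ ^ p * CpNorm p f) := by
    intro z
    have := norm_fwdDiff_iter_le (σ • z) p hf (M := CpNorm p f)
      (fun ms hms x => norm_listPDeriv_le_CpNorm hf hper ms hms.le x) x
    have h5 : l1R (σ • z) = σ * l1R z := by
      simp [l1R, abs_mul, abs_of_pos hσ, Finset.mul_sum]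
    rw [h5, mul_pow] at this
    linarith
  refine (norm_integral_le_of_norm_le ((integrable_l1R_pow p).mul_const _)
    (Eventually.of_forall h4)).trans ?_
  rw [integral_mul_const, mul_assoc]

lemma fCoeff_smooth [CompleteSpace E] {f : (Fin n → ℝ) → E} (hc : Continuous f)
    (hper : Periodic2Pi f) (σ : ℝ) (ℓ : Fin n → ℤ) :
    fCoeff (smooth p σ f) ℓ = ∑ k ∈ Finset.range p, smCoeff p k •
      ((∏ j, Real.exp (-((((k + 1 : ℕ) : ℝ) * σ) * ℓ j) ^ 2 / 2) : ℝ) : ℂ) • fCoeff f ℓ := by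
  obtain ⟨M, hM⟩ := periodic_bounded hc hper
  have h := fCoeff_sum (Finset.range p) (smCoeff p)
    (f := fun k => gaussAvg f (((k + 1 : ℕ) : ℝ) * σ)) (M := fun _ => M)
    (fun k => continuous_gaussAvg hc hM _) (fun k x => norm_gaussAvg_le hM _ x) ℓ
  refine h.trans (Finset.sum_congr rfl fun k _ => ?_)
  rw [fCoeff_gaussAvg hc hper]

lemma gauss_exp_le {σ : ℝ} (hσ : 0 < σ) (k : ℕ) (ℓ : Fin n → ℤ) :
    (∏ j, Real.exp (-((((k + 1 : ℕ) : ℝ) * σ) * ℓ j) ^ 2 / 2)) * Real.exp (σ * l1Z ℓ)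
      ≤ Real.exp ((n : ℝ) / 2) := by
  rw [← Real.exp_sum, ← Real.exp_add, l1Z, Finset.mul_sum, ← Finset.sum_add_distrib]
  refine Real.exp_le_exp.2 ?_
  have : ∀ j ∈ (Finset.univ : Finset (Fin n)),
      -((((k + 1 : ℕ) : ℝ) * σ) * ℓ j) ^ 2 / 2 + σ * |(ℓ j : ℝ)| ≤ 1 / 2 := by
    intro j _
    have h1 : (1:ℝ) ≤ ((k + 1 : ℕ) : ℝ) := by push_cast; linarith [Nat.cast_nonneg (α := ℝ) k]
    have h2 : (1:ℝ) ≤ ((k + 1 : ℕ) : ℝ) ^ 2 := one_le_pow₀ h1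
    have h3 : ((((k + 1 : ℕ) : ℝ) * σ) * ℓ j) ^ 2 =
        ((k + 1 : ℕ) : ℝ) ^ 2 * (σ * |(ℓ j : ℝ)|) ^ 2 := by
      rw [mul_pow σ, sq_abs]; ring
    rw [neg_div, h3]
    nlinarith [sq_nonneg (σ * |(ℓ j : ℝ)| - 1),
      mul_le_mul_of_nonneg_right h2 (sq_nonneg (σ * |(ℓ j : ℝ)|))]
  refine (Finset.sum_le_sum this).trans (le_of_eq ?_)
  simp; ring

/-- The summable weight. -/
noncomputable def wt (p : ℕ) (ℓ : Fin n → ℤ) : ℝ :=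
  (if ℓ = 0 then 1 else 0) + (π / 2) ^ p * ‖ℓ‖⁻¹ ^ p

lemma wt_nonneg (ℓ : Fin n → ℤ) : 0 ≤ wt p ℓ := by
  unfold wt
  have : (0:ℝ) ≤ if ℓ = 0 then 1 else 0 := by split_ifs <;> norm_num
  positivity

lemma summable_wt (hp : n + 1 ≤ p) : Summable (wt p : (Fin n → ℤ) → ℝ) := by
  refine Summable.add ?_ ((summable_norm_int hp).mul_left _)
  refine summable_of_ne_finset_zero (s := {0}) ?_
  intro ℓ hℓ
  have : ℓ ≠ 0 := by simpa using hℓ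
  simp [this]

lemma norm_fCoeff_le_wt [CompleteSpace E] (hp : n + 1 ≤ p) {f : (Fin n → ℝ) → E}
    (hf : ContDiff ℝ p f) (hper : Periodic2Pi f) (ℓ : Fin n → ℤ) :
    ‖fCoeff f ℓ‖ ≤ wt p ℓ * CpNorm p f := by
  have hM := fun x => norm_listPDeriv_le_CpNorm hf hper [] (by simp) x
  have hC0 : 0 ≤ CpNorm p f := (norm_nonneg _).trans (hM 0)
  have hp0 : p ≠ 0 := by omega
  by_cases h0 : ℓ = 0
  · have h := norm_fCoeff_le hM ℓ
    simp only [listPDeriv] at h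
    subst h0
    simpa [wt, hp0] using h
  · obtain ⟨i, hi⟩ : ∃ i, ℓ i ≠ 0 := by
      by_contra hcon
      push Not at hcon
      exact h0 (funext hcon)
    obtain ⟨j, -, hj⟩ := Finset.exists_max_image Finset.univ (fun i => ‖ℓ i‖) ⟨i, Finset.mem_univ i⟩
    have hn : ‖ℓ‖ = |(ℓ j : ℝ)| := by
      refine le_antisymm ?_ ?_
      · rw [← Int.norm_eq_abs]
        exact (pi_norm_le_iff_of_nonneg (norm_nonneg _)).2 fun i => hj i (Finset.mem_univ i)
      · rw [← Int.norm_eq_abs]; exact norm_le_pi_norm ℓ j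
    have hpos : 0 < ‖ℓ‖ := norm_pos_iff.2 h0
    have h := norm_fCoeff_mul_pow_le hp0 hf hper ℓ j
    rw [← hn, ← le_div_iff₀ (by positivity)] at h
    refine h.trans (le_of_eq ?_)
    simp only [wt, h0, if_false, zero_add, inv_pow]
    ring

lemma smooth_main [CompleteSpace E] (hp : n + 1 ≤ p) {σ : ℝ} (hσ : 0 < σ)
    {f : (Fin n → ℝ) → E} (hf : ContDiff ℝ p f) (hper : Periodic2Pi f) (ℓ : Fin n → ℤ) :
    ‖fCoeff (smooth p σ f) ℓ‖ * Real.exp (σ * l1Z ℓ) ≤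
      ((∑ k ∈ Finset.range p, (p.choose (k + 1) : ℝ)) * Real.exp ((n : ℝ) / 2) * CpNorm p f)
        * wt p ℓ := by
  have h1 : ‖fCoeff (smooth p σ f) ℓ‖ * Real.exp (σ * l1Z ℓ) ≤
      (∑ k ∈ Finset.range p, (p.choose (k + 1) : ℝ)) * Real.exp ((n : ℝ) / 2)
        * ‖fCoeff f ℓ‖ := by
    rw [fCoeff_smooth hf.continuous hper]
    refine (mul_le_mul_of_nonneg_right (norm_sum_le _ _) (Real.exp_pos _).le).trans ?_
    rw [Finset.sum_mul, Finset.sum_mul, Finset.sum_mul]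
    refine Finset.sum_le_sum fun k _ => ?_
    have hP : 0 ≤ ∏ j, Real.exp (-((((k + 1 : ℕ) : ℝ) * σ) * ℓ j) ^ 2 / 2) :=
      Finset.prod_nonneg fun _ _ => (Real.exp_pos _).le
    rw [norm_smul, norm_smul, norm_smCoeff, Complex.norm_real, Real.norm_of_nonneg hP]
    have := mul_le_mul_of_nonneg_left (gauss_exp_le hσ k ℓ)
      (show 0 ≤ (p.choose (k + 1) : ℝ) * ‖fCoeff f ℓ‖ by positivity)
    linarith
  refine h1.trans ?_
  have := mul_le_mul_of_nonneg_left (norm_fCoeff_le_wt hp hf hper ℓ)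
    (show 0 ≤ (∑ k ∈ Finset.range p, (p.choose (k + 1) : ℝ)) * Real.exp ((n : ℝ) / 2) by
      positivity)
  linarith

end Main

/-- Analytic smoothing of a `C^p` operator-valued map on `𝕋ⁿ`
(Jackson–Moser–Zehnder-type): for `p ≥ n+1` and `σ ∈ (0,1)` there is `A_σ` with exponentially
decaying Fourier coefficients such that `sup‖A - A_σ‖ ≤ C₁ σ^p ‖A‖_{C^p}`,
`Σ_ℓ ‖Â_σ(ℓ)‖ e^{σ|ℓ|} ≤ C₂ ‖A‖_{C^p}` and `⟨A_σ⟩ = ⟨A⟩`, with `C₁, C₂` depending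
only on `n` and `p`. -/
theorem stmt3 {n p : ℕ} (hn : 1 ≤ n) (hp : n + 1 ≤ p) :
    ∃ C₁ C₂ : ℝ, 0 < C₁ ∧ 0 < C₂ ∧
      ∀ (σ : ℝ), σ ∈ Set.Ioo (0:ℝ) 1 →
      ∀ (H : Type) (_ : NormedAddCommGroup H) (_ : InnerProductSpace ℂ H) (_ : CompleteSpace H)
        (A : (Fin n → ℝ) → (H →L[ℂ] H)), Periodic2Pi A → ContDiff ℝ p A →
      ∃ Aσ : (Fin n → ℝ) → (H →L[ℂ] H),
        Periodic2Pi Aσ ∧ Continuous Aσ ∧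
        Summable (fun ℓ : Fin n → ℤ => ‖fCoeff Aσ ℓ‖ * Real.exp (σ * l1Z ℓ)) ∧
        (∀ φ : Fin n → ℝ, ‖A φ - Aσ φ‖ ≤ C₁ * σ ^ p * CpNorm p A) ∧
        (∑' ℓ : Fin n → ℤ, ‖fCoeff Aσ ℓ‖ * Real.exp (σ * l1Z ℓ)) ≤ C₂ * CpNorm p A ∧
        fCoeff Aσ 0 = fCoeff A 0 := by
  have hp0 : p ≠ 0 := by omega
  set K : ℝ := (∑ k ∈ Finset.range p, (p.choose (k + 1) : ℝ)) * Real.exp ((n : ℝ) / 2) with hK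
  have hK0 : 0 ≤ K := by positivity
  have hI : 0 ≤ ∫ z, l1R z ^ p ∂(stdG n) :=
    integral_nonneg fun z => pow_nonneg (l1R_nonneg z) p
  have hW : 0 ≤ ∑' ℓ : Fin n → ℤ, wt p ℓ := tsum_nonneg fun ℓ => wt_nonneg ℓ
  refine ⟨(∫ z, l1R z ^ p ∂(stdG n)) + 1, K * (∑' ℓ : Fin n → ℤ, wt p ℓ) + 1,
    by positivity, by positivity, ?_⟩
  intro σ hσ H _ _ _ A hper hA
  have hσ0 : 0 < σ := hσ.1
  obtain ⟨M, hM⟩ := periodic_bounded hA.continuous hper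
  have hC0 : 0 ≤ CpNorm p A :=
    (norm_nonneg _).trans (norm_listPDeriv_le_CpNorm hA hper [] (by simp) 0)
  have hsum : Summable (fun ℓ : Fin n → ℤ => K * CpNorm p A * wt p ℓ) :=
    (summable_wt hp).mul_left _
  have hle := fun ℓ => smooth_main hp hσ0 hA hper ℓ
  have hS : Summable (fun ℓ : Fin n → ℤ =>
      ‖fCoeff (smooth p σ A) ℓ‖ * Real.exp (σ * l1Z ℓ)) :=
    Summable.of_nonneg_of_le (fun ℓ => by positivity) hle hsum
  refine ⟨smooth p σ A, ?_, ?_, hS, ?_, ?_, ?_⟩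
  · intro x m
    simp only [smooth]
    exact Finset.sum_congr rfl fun k _ => by rw [periodic_gaussAvg hper _ x m]
  · exact continuous_finsetSum _ fun k _ =>
      Continuous.const_smul (continuous_gaussAvg hA.continuous hM (((k + 1 : ℕ) : ℝ) * σ))
        (smCoeff p k)
  · intro φ
    refine (smooth_error hA hper hσ0 φ).trans ?_
    gcongr
    linarith
  · refine (hS.tsum_le_tsum hle hsum).trans ?_
    rw [tsum_mul_left]
    nlinarith
  · rw [fCoeff_smooth hA.continuous hper]
    simp only [Pi.zero_apply, Int.cast_zero, mul_zero]
    simp [← Finset.sum_smul, sum_smCoeff hp0]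
end

section
/- Let n ≥ 1, γ, τ > 0, ν ∈ ℝⁿ a Diophantine vector in DC^n(γ, τ), σ ≥ 0, K > 0, H a complex Hilbert space, and A : 𝕋ⁿ → B(H) with ‖A‖_σ := Σ_{ℓ ∈ ℤⁿ} ‖Â(ℓ)‖_op e^{σ|ℓ|} < ∞. Then the trigonometric polynomial G(φ) := − Σ_{ℓ ∈ ℤⁿ, 0 < |ℓ| ≤ K} (Â(ℓ)/(i ν·ℓ)) e^{i ℓ·φ} is well defined, solves the homological equation (ν·∂_φ)G(φ) + A(φ) = A^{uv}(φ) + ⟨A⟩ for all φ ∈ 𝕋ⁿ, and satisfies ‖G‖_σ ≤ γ^{-1} K^τ ‖A‖_σ. -/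
open MeasureTheory Real Filter

theorem aux_mFourier {n : ℕ} (ℓ : Fin n → ℤ) (y : Fin n → ℝ) :
    UnitAddTorus.mFourier ℓ (fun i => ((y i : ℝ) : UnitAddCircle)) =
      Complex.exp (Complex.I * ∑ j, (ℓ j : ℂ) * (((2 * π) • y) j : ℂ)) := by
  simp only [UnitAddTorus.mFourier, ContinuousMap.coe_mk, fourier_coe_apply]
  rw [← Complex.exp_sum, Finset.mul_sum]
  congr 1
  refine Finset.sum_congr rfl fun j _ => ?_
  simp only [Pi.smul_apply, smul_eq_mul]
  push_cast
  ring

open scoped Pointwise in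
theorem aux_scalar {n : ℕ} (f : (Fin n → ℝ) → ℂ) (hper : Periodic2Pi f) (hcont : Continuous f)
    (hsum : Summable (fCoeff f)) (φ : Fin n → ℝ) :
    HasSum (fun ℓ : Fin n → ℤ =>
      Complex.exp (Complex.I * ∑ j, (ℓ j : ℂ) * (φ j : ℂ)) • fCoeff f ℓ) (f φ) := by
  have hpi : (0:ℝ) < 2 * π := by positivity
  let q : (Fin n → ℝ) → UnitAddTorus (Fin n) := Pi.map (fun _ => ((↑) : ℝ → UnitAddCircle))
  have hq : IsOpenQuotientMap q := IsOpenQuotientMap.piMap fun _ =>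
    QuotientAddGroup.isOpenQuotientMap_mk
  let f₁ : (Fin n → ℝ) → ℂ := fun y => f ((2 * π) • y)
  have hfac : ∀ y z, q y = q z → f₁ y = f₁ z := by
    intro y z h
    have h1 : ∀ i, ∃ m : ℤ, y i = z i + m := by
      intro i
      have h2 : ((y i : ℝ) : UnitAddCircle) = ((z i : ℝ) : UnitAddCircle) := congrFun h i
      rw [← sub_eq_zero, ← AddCircle.coe_sub, AddCircle.coe_eq_zero_iff] at h2
      obtain ⟨m, hm⟩ := h2
      refine ⟨m, ?_⟩
      rw [zsmul_eq_mul, mul_one] at hm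
      linarith
    choose m hm using h1
    have := hper ((2 * π) • z) m
    change f _ = f _
    rw [← this]
    congr 1
    ext i
    simp [hm i]
    ring
  let g₀ : UnitAddTorus (Fin n) → ℂ := fun t => f₁ (Function.surjInv hq.surjective t)
  have hg₀ : ∀ y, g₀ (q y) = f₁ y := fun y => hfac _ _ (Function.surjInv_eq hq.surjective (q y))
  have hg₀c : Continuous g₀ := by
    rw [← hq.continuous_comp_iff]
    have : g₀ ∘ q = f₁ := funext hg₀
    rw [this]
    exact hcont.comp (continuous_const_smul _)
  let g : C(UnitAddTorus (Fin n), ℂ) := ⟨g₀, hg₀c⟩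
  have hcoef : ∀ ℓ, UnitAddTorus.mFourierCoeff g ℓ = fCoeff f ℓ := by
    intro ℓ
    rw [UnitAddTorus.mFourierCoeff_eq_integral _ _ 0, fCoeff]
    have h1 : ∀ y : Fin n → ℝ, (UnitAddTorus.mFourier (-ℓ) fun i => ((y i : ℝ) : UnitAddCircle)) •
        g (fun i => ((y i : ℝ) : UnitAddCircle)) =
        (fun x : Fin n → ℝ => Complex.exp (-Complex.I * (∑ j, (ℓ j : ℂ) * (x j : ℂ))) • f x)
          ((2 * π) • y) := by
      intro y
      have := hg₀ y
      change _ • g₀ (q y) = _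
      rw [this, aux_mFourier]
      simp [f₁]
    simp_rw [h1]
    have h2 : {x : Fin n → ℝ | ∀ i, x i ∈ Set.Ioc ((0 : Fin n → ℝ) i) ((0 : Fin n → ℝ) i + 1)}
        = Set.univ.pi (fun i => Set.Ioc ((0 : Fin n → ℝ) i) ((1 : Fin n → ℝ) i)) := by
      ext x; simp
    have h3 : Set.univ.pi (fun _ : Fin n => Set.Icc (0:ℝ) (2 * π)) =
        (2 * π) • (Set.Icc (0 : Fin n → ℝ) 1) := by
      ext x
      rw [Set.mem_smul_set_iff_inv_smul_mem₀ hpi.ne', ← Set.pi_univ_Icc]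
      simp only [Set.mem_univ_pi, Set.mem_Icc, Pi.smul_apply, smul_eq_mul, Pi.zero_apply,
        Pi.one_apply]
      refine forall_congr' fun i => ?_
      rw [inv_mul_le_iff₀ hpi, mul_one]
      refine and_congr_left fun _ => ?_
      rw [mul_nonneg_iff_of_pos_left (inv_pos.2 hpi)]
    rw [h2, h3, volume_pi, setIntegral_congr_set Measure.univ_pi_Ioc_ae_eq_Icc, ← volume_pi]
    rw [Measure.setIntegral_comp_smul_of_pos volume
      (fun x : Fin n → ℝ => Complex.exp (-Complex.I * (∑ j, (ℓ j : ℂ) * (x j : ℂ))) • f x) _ hpi]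
    simp
  have hs : Summable (UnitAddTorus.mFourierCoeff g) := by
    have : UnitAddTorus.mFourierCoeff g = fCoeff f := funext hcoef
    rw [this]; exact hsum
  have key := UnitAddTorus.hasSum_mFourier_series_apply_of_summable hs (q ((2 * π)⁻¹ • φ))
  have h4 : g (q ((2 * π)⁻¹ • φ)) = f φ := by
    change g₀ _ = _
    rw [hg₀]
    simp only [f₁, smul_inv_smul₀ hpi.ne']
  rw [h4] at key
  refine key.congr_fun ?_
  intro ℓ
  have := aux_mFourier ℓ ((2 * π)⁻¹ • φ)
  rw [smul_inv_smul₀ hpi.ne'] at this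
  rw [hcoef, ← this, smul_eq_mul, smul_eq_mul, mul_comm]
  rfl

theorem aux_coeff_comp {n : ℕ} {E : Type*} [NormedAddCommGroup E] [NormedSpace ℂ E]
    [CompleteSpace E] (A : (Fin n → ℝ) → E) (hcont : Continuous A) (L : E →L[ℂ] ℂ)
    (ℓ : Fin n → ℤ) : fCoeff (fun x => L (A x)) ℓ = L (fCoeff A ℓ) := by
  have hint : IntegrableOn (fun x : Fin n → ℝ =>
      Complex.exp (-Complex.I * (∑ j, (ℓ j : ℂ) * (x j : ℂ))) • A x)
      (Set.univ.pi (fun _ : Fin n => Set.Icc (0:ℝ) (2 * π))) := by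
    apply ContinuousOn.integrableOn_compact
    · exact isCompact_univ_pi fun _ => isCompact_Icc
    · apply Continuous.continuousOn
      fun_prop
  unfold fCoeff
  have h := L.integral_comp_comm hint
  simp only [map_smul] at h
  rw [h]
  exact ((L.restrictScalars ℝ).map_smul _ _).symm

theorem aux_exp_norm {n : ℕ} (ℓ : Fin n → ℤ) (φ : Fin n → ℝ) :
    ‖Complex.exp (Complex.I * ∑ j, (ℓ j : ℂ) * (φ j : ℂ))‖ = 1 := by
  have : (∑ j, (ℓ j : ℂ) * (φ j : ℂ)) = ((∑ j, (ℓ j : ℝ) * φ j : ℝ) : ℂ) := by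
    push_cast; rfl
  rw [this, Complex.norm_exp_I_mul_ofReal]

theorem aux_fourier {n : ℕ} {E : Type*} [NormedAddCommGroup E] [NormedSpace ℂ E]
    [CompleteSpace E] (A : (Fin n → ℝ) → E) (hper : Periodic2Pi A) (hcont : Continuous A)
    (hsum : Summable (fun ℓ => ‖fCoeff A ℓ‖)) (φ : Fin n → ℝ) :
    HasSum (fun ℓ : Fin n → ℤ =>
      Complex.exp (Complex.I * ∑ j, (ℓ j : ℂ) * (φ j : ℂ)) • fCoeff A ℓ) (A φ) := by
  have hs : Summable (fun ℓ : Fin n → ℤ =>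
      Complex.exp (Complex.I * ∑ j, (ℓ j : ℂ) * (φ j : ℂ)) • fCoeff A ℓ) := by
    apply Summable.of_norm
    simpa only [norm_smul, aux_exp_norm, one_mul] using hsum
  have heq : (∑' ℓ : Fin n → ℤ,
      Complex.exp (Complex.I * ∑ j, (ℓ j : ℂ) * (φ j : ℂ)) • fCoeff A ℓ) = A φ := by
    refine (SeparatingDual.eq_iff_forall_dual_eq (R := ℂ)).2 fun L => ?_
    have h1 := hs.hasSum.mapL L
    have h2 := aux_scalar (fun x => L (A x)) (fun x m => congrArg L (hper x m))
      (L.continuous.comp hcont) (by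
        have : fCoeff (fun x => L (A x)) = fun ℓ => L (fCoeff A ℓ) :=
          funext fun ℓ => aux_coeff_comp A hcont L ℓ
        rw [this]
        exact (Summable.of_norm hsum).mapL L) φ
    refine h1.unique (h2.congr_fun fun ℓ => ?_)
    rw [aux_coeff_comp A hcont L, map_smul]
  rw [← heq]
  exact hs.hasSum

theorem aux_deriv {n : ℕ} {E : Type*} [NormedAddCommGroup E] [NormedSpace ℂ E]
    (ν : Fin n → ℝ) (S : Finset (Fin n → ℤ)) (c : (Fin n → ℤ) → E)
    (hne : ∀ ℓ ∈ S, (Complex.I * ∑ j, (ν j : ℂ) * (ℓ j : ℂ)) ≠ 0)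
    (G : (Fin n → ℝ) → E)
    (hG : ∀ φ : Fin n → ℝ, G φ = - ∑ ℓ ∈ S,
        (Complex.exp (Complex.I * ∑ j, (ℓ j : ℂ) * (φ j : ℂ)) *
          (Complex.I * ∑ j, (ν j : ℂ) * (ℓ j : ℂ))⁻¹) • c ℓ) (φ : Fin n → ℝ) :
    (∑ j, ν j • fderiv ℝ G φ (Pi.single j 1)) =
      - ∑ ℓ ∈ S, Complex.exp (Complex.I * ∑ j, (ℓ j : ℂ) * (φ j : ℂ)) • c ℓ := by
  let M : (Fin n → ℤ) → ((Fin n → ℝ) →L[ℝ] ℂ) := fun ℓ =>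
    ∑ j, (ℓ j : ℂ) • (Complex.ofRealCLM.comp (ContinuousLinearMap.proj (R := ℝ) j))
  have hM : ∀ ℓ x, M ℓ x = ∑ j, (ℓ j : ℂ) * (x j : ℂ) := by
    intro ℓ x
    simp [M]
  have hd := (HasFDerivAt.fun_sum (u := S) fun ℓ _ =>
    (((((M ℓ).hasFDerivAt (x := φ)).const_mul Complex.I).cexp).mul_const
      (Complex.I * ∑ j, (ν j : ℂ) * (ℓ j : ℂ))⁻¹).smul_const (c ℓ)).fun_neg
  have hGe : G = fun x => - ∑ ℓ ∈ S, (Complex.exp (Complex.I * M ℓ x) *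
      (Complex.I * ∑ j, (ν j : ℂ) * (ℓ j : ℂ))⁻¹) • c ℓ := by
    funext x
    rw [hG]
    simp only [hM]
  rw [← hGe] at hd
  have hν : (∑ j, ν j • fderiv ℝ G φ (Pi.single j 1)) = fderiv ℝ G φ ν := by
    conv_rhs => rw [pi_eq_sum_univ' ν]
    rw [map_sum]
    refine Finset.sum_congr rfl fun j _ => ?_
    rw [← map_smul]
  rw [hν, hd.fderiv]
  simp only [neg_apply, sum_apply]
  congr 1
  refine Finset.sum_congr rfl fun ℓ hℓ => ?_
  have h0 := hne ℓ hℓ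
  have hc : (∑ j, (ℓ j : ℂ) * (ν j : ℂ)) = ∑ j, (ν j : ℂ) * (ℓ j : ℂ) :=
    Finset.sum_congr rfl fun j _ => mul_comm _ _
  simp only [ContinuousLinearMap.smulRight_apply, smul_apply, hM, smul_eq_mul,
    hc]
  congr 1
  rw [mul_left_comm, inv_mul_cancel₀ h0, mul_one]

theorem aux_l1_pos {n : ℕ} (ℓ : Fin n → ℤ) (h : ℓ ≠ 0) : 0 < l1Z ℓ := by
  obtain ⟨i, hi⟩ := Function.ne_iff.1 h
  refine Finset.sum_pos' (fun _ _ => abs_nonneg _) ⟨i, Finset.mem_univ _, ?_⟩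
  rw [abs_pos]
  exact_mod_cast hi

theorem aux_mem {n : ℕ} (K : ℝ) (ℓ : Fin n → ℤ) (h : l1Z ℓ ≤ K) :
    ℓ ∈ Finset.Icc (fun _ : Fin n => -⌈K⌉) (fun _ => ⌈K⌉) := by
  have h1 : ∀ i, |ℓ i| ≤ ⌈K⌉ := by
    intro i
    have h2 : |(ℓ i : ℝ)| ≤ l1Z ℓ :=
      Finset.single_le_sum (f := fun j => |(ℓ j : ℝ)|) (fun _ _ => abs_nonneg _)
        (Finset.mem_univ i)
    have h3 := (h2.trans h).trans (Int.le_ceil K)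
    exact_mod_cast h3
  rw [Finset.mem_Icc]
  exact ⟨fun i => (abs_le.1 (h1 i)).1, fun i => (abs_le.1 (h1 i)).2⟩

/-- Solution of the homological equation: for a Diophantine `ν ∈ DC^n(γ,τ)`, the
trigonometric polynomial `G(φ) = -Σ_{0<|ℓ|≤K} (Â(ℓ)/(iν·ℓ)) e^{iℓ·φ}` solves
`(ν·∂_φ)G + A = A^{uv} + ⟨A⟩` and `‖G‖_σ ≤ γ⁻¹ K^τ ‖A‖_σ`. -/
theorem stmt5 {n : ℕ} (hn : 1 ≤ n) (γ τ : ℝ) (hγ : 0 < γ) (hτ : 0 < τ)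
    (ν : Fin n → ℝ)
    (hdio : ∀ ℓ : Fin n → ℤ, ℓ ≠ 0 → γ / (l1Z ℓ) ^ τ ≤ |∑ j, ν j * (ℓ j : ℝ)|)
    (σ K : ℝ) (hσ : 0 ≤ σ) (hK : 0 < K)
    {H : Type*} [NormedAddCommGroup H] [InnerProductSpace ℂ H] [CompleteSpace H]
    (A : (Fin n → ℝ) → (H →L[ℂ] H)) (hper : Periodic2Pi A) (hcont : Continuous A)
    (hsum : Summable (fun ℓ : Fin n → ℤ => ‖fCoeff A ℓ‖ * Real.exp (σ * l1Z ℓ)))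
    (S : Finset (Fin n → ℤ))
    (hS : S = (Finset.Icc (fun _ => -⌈K⌉) (fun _ => ⌈K⌉)).filter
        (fun ℓ : Fin n → ℤ => ℓ ≠ 0 ∧ l1Z ℓ ≤ K))
    (G : (Fin n → ℝ) → (H →L[ℂ] H))
    (hG : ∀ φ : Fin n → ℝ, G φ = - ∑ ℓ ∈ S,
        (Complex.exp (Complex.I * ∑ j, (ℓ j : ℂ) * (φ j : ℂ)) *
          (Complex.I * ∑ j, (ν j : ℂ) * (ℓ j : ℂ))⁻¹) • fCoeff A ℓ) :
    (∀ φ : Fin n → ℝ,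
      (∑ j, ν j • fderiv ℝ G φ (Pi.single j 1)) + A φ
        = (∑' ℓ : Fin n → ℤ, if K < l1Z ℓ then
            Complex.exp (Complex.I * ∑ j, (ℓ j : ℂ) * (φ j : ℂ)) • fCoeff A ℓ else 0)
          + fCoeff A 0) ∧
    (∑ ℓ ∈ S, ‖(Complex.I * ∑ j, (ν j : ℂ) * (ℓ j : ℂ))⁻¹ • fCoeff A ℓ‖ * Real.exp (σ * l1Z ℓ))
      ≤ γ⁻¹ * K ^ τ * (∑' ℓ : Fin n → ℤ, ‖fCoeff A ℓ‖ * Real.exp (σ * l1Z ℓ)) := by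
  have hSm : ∀ ℓ, ℓ ∈ S ↔ (ℓ ≠ 0 ∧ l1Z ℓ ≤ K) := by
    intro ℓ
    rw [hS, Finset.mem_filter]
    exact ⟨fun h => h.2, fun h => ⟨aux_mem K ℓ h.2, h⟩⟩
  have hcast : ∀ ℓ : Fin n → ℤ, (∑ j, (ν j : ℂ) * (ℓ j : ℂ)) =
      ((∑ j, ν j * (ℓ j : ℝ) : ℝ) : ℂ) := by
    intro ℓ; push_cast; rfl
  have hlow : ∀ ℓ ∈ S, γ / K ^ τ ≤ |∑ j, ν j * (ℓ j : ℝ)| := by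
    intro ℓ hℓ
    obtain ⟨h0, h1⟩ := (hSm ℓ).1 hℓ
    have hp := aux_l1_pos ℓ h0
    refine le_trans ?_ (hdio ℓ h0)
    exact div_le_div_of_nonneg_left hγ.le (Real.rpow_pos_of_pos hp τ)
      (Real.rpow_le_rpow hp.le h1 hτ.le)
  have hKτ : 0 < K ^ τ := Real.rpow_pos_of_pos hK τ
  have hlpos : ∀ ℓ ∈ S, 0 < |∑ j, ν j * (ℓ j : ℝ)| := fun ℓ hℓ =>
    lt_of_lt_of_le (div_pos hγ hKτ) (hlow ℓ hℓ)
  have hne : ∀ ℓ ∈ S, (Complex.I * ∑ j, (ν j : ℂ) * (ℓ j : ℂ)) ≠ 0 := by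
    intro ℓ hℓ
    rw [hcast]
    exact mul_ne_zero Complex.I_ne_zero (Complex.ofReal_ne_zero.2 (abs_pos.1 (hlpos ℓ hℓ)))
  have hl1 : ∀ ℓ : Fin n → ℤ, 0 ≤ l1Z ℓ := fun ℓ => Finset.sum_nonneg fun _ _ => abs_nonneg _
  constructor
  · intro φ
    have hs0 : Summable (fun ℓ : Fin n → ℤ => ‖fCoeff A ℓ‖) := by
      refine Summable.of_nonneg_of_le (fun _ => norm_nonneg _) (fun ℓ => ?_) hsum
      exact le_mul_of_one_le_right (norm_nonneg _)
        (Real.one_le_exp (mul_nonneg hσ (hl1 ℓ)))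
    have hF := aux_fourier A hper hcont hs0 φ
    rw [aux_deriv ν S (fCoeff A) hne G hG φ]
    set e : (Fin n → ℤ) → (H →L[ℂ] H) := fun ℓ =>
      Complex.exp (Complex.I * ∑ j, (ℓ j : ℂ) * (φ j : ℂ)) • fCoeff A ℓ with he
    have h0S : (0 : Fin n → ℤ) ∉ S := fun h => ((hSm 0).1 h).1 rfl
    have hz : l1Z (0 : Fin n → ℤ) = 0 := by simp [l1Z]
    have he0 : e 0 = fCoeff A 0 := by simp [he]
    have h1 : HasSum (fun ℓ => if ℓ ∈ insert 0 S then e ℓ else 0)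
        (∑ ℓ ∈ insert 0 S, e ℓ) := by
      have := hasSum_sum_of_ne_finset_zero (s := insert 0 S)
        (f := fun ℓ => if ℓ ∈ insert 0 S then e ℓ else 0)
        (L := SummationFilter.unconditional _) (fun b hb => if_neg hb)
      rwa [Finset.sum_congr rfl (fun b hb => if_pos hb)] at this
    have h2 := hF.sub h1
    have h3 : (fun ℓ => e ℓ - if ℓ ∈ insert 0 S then e ℓ else 0) =
        fun ℓ => if K < l1Z ℓ then e ℓ else 0 := by
      funext ℓ
      by_cases hK' : K < l1Z ℓ
      · have : ℓ ∉ insert 0 S := by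
          rw [Finset.mem_insert, hSm]
          rintro (rfl | h)
          · rw [hz] at hK'; linarith
          · linarith [h.2]
        rw [if_neg this, if_pos hK', sub_zero]
      · have : ℓ ∈ insert 0 S := by
          rw [Finset.mem_insert, hSm]
          by_cases h : ℓ = 0
          · exact Or.inl h
          · exact Or.inr ⟨h, not_lt.1 hK'⟩
        rw [if_pos this, if_neg hK', sub_self]
    have h4 : HasSum (fun ℓ => if K < l1Z ℓ then e ℓ else 0) (A φ - ∑ ℓ ∈ insert 0 S, e ℓ) := by
      rw [← h3]; exact h2
    rw [h4.tsum_eq, Finset.sum_insert h0S, he0]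
    abel
  · have hle : ∀ ℓ ∈ S,
        ‖(Complex.I * ∑ j, (ν j : ℂ) * (ℓ j : ℂ))⁻¹ • fCoeff A ℓ‖ * Real.exp (σ * l1Z ℓ)
        ≤ γ⁻¹ * K ^ τ * (‖fCoeff A ℓ‖ * Real.exp (σ * l1Z ℓ)) := by
      intro ℓ hℓ
      rw [norm_smul, mul_assoc]
      refine mul_le_mul_of_nonneg_right ?_ (by positivity)
      rw [hcast, norm_inv, norm_mul, Complex.norm_I, one_mul, Complex.norm_real,
        Real.norm_eq_abs]
      have := inv_anti₀ (div_pos hγ hKτ) (hlow ℓ hℓ)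
      rwa [inv_div, div_eq_inv_mul] at this
    refine (Finset.sum_le_sum hle).trans ?_
    rw [← Finset.mul_sum]
    refine mul_le_mul_of_nonneg_left ?_ (by positivity)
    exact hsum.sum_le_tsum S (fun _ _ => by positivity)
end
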